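/- Under the alternative model H₁ with community size k = o(n), for any p ≥ 2 and any ordered path of distinct vertices 𝒫 = (a_1,…,a_p), the probability (over both the uniform torus positions of the type-B vertices and the independent edge indicators) that all consecutive edges of the path are present factorizes as P₁(a_1 ↔ a_2 ↔ … ↔ a_p) = Π_{i=1}^{p-1} P₁(a_i ↔ a_{i+1}), and if m denotes the number of consecutive pairs (a_i, a_{i+1}) in which both vertices are type-B, then this probability is O( w_{a_1}^{-1} w_{a_p}^{-1} Π_{i=1}^{p} w_{a_i}² / (k^m n^{p-m-1}) ). -/

import Mathlib

open MeasureTheory ProbabilityTheory Filter Finset Asymptotics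
open scoped Topology ENNReal NNReal Classical

noncomputable section

/-- The torus distance on `[0,1]^d`:
`‖x - y‖ = sup_i min (|x i - y i|) (1 - |x i - y i|)`. -/
def torusDist (d : ℕ) (x y : Fin d → ℝ) : ℝ :=
  ⨆ i : Fin d, min |x i - y i| (1 - |x i - y i|)

/-- The uniform probability measure on `[0,1]`. -/
def unifI : Measure ℝ := volume.restrict (Set.Icc 0 1)

/-- The uniform probability measure on the cube `[0,1]^d`. -/
def unifCube (d : ℕ) : Measure (Fin d → ℝ) := volume.restrict (Set.Icc 0 1)

/-- Assumption 1: the empirical weight distribution has a power-law tail,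
`1 - F_n(x) = C x^(1-τ) (1 + o(1))` uniformly for `w0 ≤ x ≤ n^(1/(τ-1)) / log n`. -/
def Assumption1 (τ C w0 : ℝ) (w : (n : ℕ) → Fin n → ℝ) : Prop :=
  ∀ ε > (0:ℝ), ∃ N : ℕ, ∀ n ≥ N, ∀ x : ℝ, w0 ≤ x →
    x ≤ (n : ℝ) ^ ((1:ℝ) / (τ - 1)) / Real.log n →
    |((univ.filter fun i : Fin n => x < w n i).card : ℝ) / n - C * x ^ (1 - τ)|
      ≤ ε * (C * x ^ (1 - τ))

/-- Assumption 2: the empirical distribution of the community weights has a power-law tail,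
`1 - F_k(x) = C x^(1-τ) (1 + o(1))` for `w0 ≤ x = O(k^(1/(τ-1)) / log k)`.
The community consists of the vertices `i` with `i.val < k n`. -/
def Assumption2 (τ C w0 : ℝ) (k : ℕ → ℕ) (w : (n : ℕ) → Fin n → ℝ) : Prop :=
  ∀ A > (0:ℝ), ∀ ε > (0:ℝ), ∃ N : ℕ, ∀ n ≥ N, ∀ x : ℝ, w0 ≤ x →
    x ≤ A * (k n : ℝ) ^ ((1:ℝ) / (τ - 1)) / Real.log (k n) →
    |((univ.filter fun i : Fin n => i.val < k n ∧ x < w n i).card : ℝ) / (k n)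
      - C * x ^ (1 - τ)| ≤ ε * (C * x ^ (1 - τ))

/-- `μ = E[X] = C (τ-1)/(τ-2) w₀^(2-τ)`, the mean of the Pareto distribution. -/
def muPar (τ C w0 : ℝ) : ℝ := C * (τ - 1) / (τ - 2) * w0 ^ (2 - τ)

/-- IRG connection probability `p_{ij} = min (w_i w_j / (μ n)) 1`. -/
def pIRG (n : ℕ) (μ : ℝ) (w : Fin n → ℝ) (i j : Fin n) : ℝ :=
  min (w i * w j / (μ * n)) 1

/-- The correction constant `C₁ = (1 + (γ-1)⁻¹) 2^d`. -/
def C1 (d : ℕ) (γ : ℝ) : ℝ := (1 + (γ - 1)⁻¹) * 2 ^ d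

/-- The geometric (GIRG) connection probability
`min (w_i w_j / (μ k ‖x-y‖^d)) 1 ^ γ` (without the correction factor). -/
def pGIRG (k d : ℕ) (γ μ wi wj : ℝ) (x y : Fin d → ℝ) : ℝ :=
  (min (wi * wj / (μ * k * torusDist d x y ^ d)) 1) ^ γ

/-- The connection probability under the alternative model `H₁`: type-B vertices are the
vertices `i` with `i.val < k`; two type-B vertices use the geometric rule, any other pair
uses the IRG rule; both carry the correction factor `(1 + C₁)⁻¹`. -/
def pH1 (n k d : ℕ) (γ μ : ℝ) (w : Fin n → ℝ) (pos : Fin n → Fin d → ℝ) (i j : Fin n) : ℝ :=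
  if i.val < k ∧ j.val < k then
    (1 + C1 d γ)⁻¹ * pGIRG k d γ μ (w i) (w j) (pos i) (pos j)
  else (1 + C1 d γ)⁻¹ * pIRG n μ w i j

/-- Sample space of the alternative model: a uniform position on the torus for every vertex
(only those of the community members are used) and an independent uniform `[0,1]` variable
for every pair of vertices, generating the conditionally independent edge indicators. -/
abbrev H1Space (n d : ℕ) := (Fin n → Fin d → ℝ) × (Fin n → Fin n → ℝ)

/-- The law `P₁` of the alternative model (positions and edge-generating uniforms). -/
def H1Measure (n d : ℕ) : Measure (H1Space n d) :=
  (Measure.pi fun _ : Fin n => unifCube d).prod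
    (Measure.pi fun _ : Fin n => Measure.pi fun _ : Fin n => unifI)

/-- Under `H₁`, the edge `{i,j}` is present iff the uniform variable attached to the pair
`{i,j}` is at most `p_{ij}` (which depends on the positions); no self-loops. -/
def edgeH1 (n k d : ℕ) (γ μ : ℝ) (w : Fin n → ℝ) (ω : H1Space n d) (i j : Fin n) : Prop :=
  i ≠ j ∧ ω.2 (min i j) (max i j) ≤ pH1 n k d γ μ w ω.1 i j

def triH1 (n k d : ℕ) (γ μ : ℝ) (w : Fin n → ℝ) (ω : H1Space n d) (a b c : Fin n) : Prop :=
  edgeH1 n k d γ μ w ω a b ∧ edgeH1 n k d γ μ w ω b c ∧ edgeH1 n k d γ μ w ω c a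

/-- The weighted triangle statistic under `H₁`. -/
def WH1 (n k d : ℕ) (γ μ : ℝ) (w : Fin n → ℝ) (ω : H1Space n d) : ℝ :=
  ∑ a : Fin n, ∑ b : Fin n, ∑ c : Fin n,
    if triH1 n k d γ μ w ω a b c then (w a * w b * w c)⁻¹ else 0

/-- The local weighted triangle statistic
`W(a) = (n / w_a²) Σ_{b,c} (w_b w_c)⁻¹ 1{a,b,c triangle}`. -/
def WlocH1 (n k d : ℕ) (γ μ : ℝ) (w : Fin n → ℝ) (a : Fin n) (ω : H1Space n d) : ℝ :=
  ((n : ℝ) / w a ^ 2) * ∑ b : Fin n, ∑ c : Fin n,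
    if triH1 n k d γ μ w ω a b c then (w b * w c)⁻¹ else 0

/-- The number of geometric (type-B/type-B) consecutive pairs along the path `a`. -/
def pathGeoCount (n kn p : ℕ) (a : Fin (p + 1) → Fin n) : ℕ :=
  (univ.filter fun i : Fin p => (a i.castSucc).val < kn ∧ (a i.succ).val < kn).card

/-!
Given the positions, the edges of a path of distinct vertices are independent, since its
consecutive pairs are pairwise distinct. The path probability is therefore the integral over the
positions of a product of functions of the distances `‖x_{a_i} - x_{a_{i+1}}‖`. By translation
invariance of the Haar measure on the torus, integrating out one endpoint of an edge leaves a
constant that does not depend on the other endpoint, so peeling off the vertices of the path one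
at a time factorizes the integral.

For a type-B pair put `c = w_i w_j / (μ k)`. The balls `{z | ‖z‖ ^ d ≤ s}` have volume at most
`2 ^ d * s`, so the layer-cake formula bounds the mean of `min (c / ‖z‖ ^ d) 1 ^ γ` by
`2 ^ d * c * ∫ u in 0..1, u ^ (-1 / γ) = C₁ * c`. The correction factor `(1 + C₁)⁻¹` absorbs `C₁`,
so every edge has probability at most `w_i w_j / (μ k)` or `w_i w_j / (μ n)`, and the path bound
holds with the constant `μ ^ (-p)`.
-/

section ProductMeasure

theorem measurePreserving_pi_comp_injective {ι κ : Type*} [Fintype ι] [Fintype κ] {X : κ → Type*}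
    [∀ j, MeasurableSpace (X j)] (ν : ∀ j, Measure (X j)) [∀ j, IsProbabilityMeasure (ν j)]
    {e : ι → κ} (he : Function.Injective e) :
    MeasurePreserving (fun (u : ∀ j, X j) i => u (e i)) (Measure.pi ν)
      (Measure.pi fun i => ν (e i)) :=
  ⟨by fun_prop, by
    simpa only [Measure.infinitePi_eq_pi] using
      Measure.map_infinitePi_infinitePi_of_inj (P := ν) he⟩

theorem measurePreserving_pi_uncurry {ι κ X : Type*} [Fintype ι] [Fintype κ] [MeasurableSpace X]
    (ν : ι → κ → Measure X) [∀ i j, IsProbabilityMeasure (ν i j)] :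
    MeasurePreserving Function.uncurry (Measure.pi fun i => Measure.pi (ν i))
      (Measure.pi fun q : ι × κ => ν q.1 q.2) :=
  ⟨(MeasurableEquiv.curry ι κ X).symm.measurable, by
    have h := Measure.infinitePi_map_curry_symm ν
    simp only [Measure.infinitePi_eq_pi] at h
    exact h⟩

theorem measurable_measure_Iic {α : Type*} [MeasurableSpace α] [TopologicalSpace α] [LinearOrder α]
    [OrderClosedTopology α] [BorelSpace α] (ν : Measure α) : Measurable fun t => ν (Set.Iic t) :=
  Monotone.measurable fun _ _ h => measure_mono (Set.Iic_subset_Iic.2 h)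

theorem pi_pi_setOf_forall_mem {ι κ κ' X : Type*} [Fintype ι] [Fintype κ] [Fintype κ']
    [MeasurableSpace X] (ν : κ → κ' → Measure X) [∀ r s, IsProbabilityMeasure (ν r s)]
    {e : ι → κ × κ'} (he : Function.Injective e) {S : ι → Set X} (hS : ∀ i, MeasurableSet (S i)) :
    (Measure.pi fun r => Measure.pi (ν r)) {u | ∀ i, u (e i).1 (e i).2 ∈ S i}
      = ∏ i, ν (e i).1 (e i).2 (S i) := by
  have h := (measurePreserving_pi_comp_injective _ he).comp (measurePreserving_pi_uncurry ν)
  rw [← Measure.pi_pi, ← h.measure_preimage (MeasurableSet.univ_pi hS).nullMeasurableSet]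
  congr 1
  ext u
  simp [Function.uncurry]

theorem prod_pi_pi_setOf_forall_le {Ω ι κ κ' : Type*} [MeasurableSpace Ω] [Fintype ι] [Fintype κ]
    [Fintype κ'] (ρ : Measure Ω) (ν : κ → κ' → Measure ℝ) [∀ r s, IsProbabilityMeasure (ν r s)]
    {e : ι → κ × κ'} (he : Function.Injective e) {f : ι → Ω → ℝ} (hf : ∀ i, Measurable (f i)) :
    (ρ.prod (Measure.pi fun r => Measure.pi (ν r))) {ω | ∀ i, ω.2 (e i).1 (e i).2 ≤ f i ω.1}
      = ∫⁻ x, ∏ i, ν (e i).1 (e i).2 (Set.Iic (f i x)) ∂ρ := by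
  have hmeas : MeasurableSet {ω : Ω × (κ → κ' → ℝ) | ∀ i, ω.2 (e i).1 (e i).2 ≤ f i ω.1} := by
    rw [Set.ofPred_forall]
    exact .iInter fun i => measurableSet_le (by fun_prop) ((hf i).comp measurable_fst)
  rw [Measure.prod_apply hmeas]
  exact lintegral_congr fun x =>
    pi_pi_setOf_forall_mem ν he (S := fun i => Set.Iic (f i x)) fun _ => measurableSet_Iic

theorem lintegral_pi_prod_path {X : Type*} [MeasurableSpace X] (ν : Measure X)
    [IsProbabilityMeasure ν] {p : ℕ} {G : Fin p → X → X → ℝ≥0∞} {c : Fin p → ℝ≥0∞}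
    (hG : ∀ i, Measurable (Function.uncurry (G i)))
    (hc : ∀ i, ∀ᵐ y ∂ν, ∫⁻ x, G i x y ∂ν = c i) :
    ∫⁻ x : Fin (p + 1) → X, ∏ i, G i (x i.castSucc) (x i.succ) ∂(Measure.pi fun _ => ν)
      = ∏ i, c i := by
  induction p with
  | zero => simp
  | succ p ih =>
    have hGm {Y : Type _} [MeasurableSpace Y] (i : Fin (p + 1)) {f g : Y → X} (hf : Measurable f)
        (hg : Measurable g) : Measurable fun z => G i (f z) (g z) := (hG i).comp (hf.prodMk hg)
    have hstart : ∀ᵐ y ∂(Measure.pi fun _ : Fin (p + 1) => ν), ∫⁻ x, G 0 x (y 0) ∂ν = c 0 :=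
      (Measure.quasiMeasurePreserving_eval (fun _ : Fin (p + 1) => ν) 0).ae (hc 0)
    calc ∫⁻ x : Fin (p + 1 + 1) → X, ∏ i, G i (x i.castSucc) (x i.succ) ∂(Measure.pi fun _ => ν)
        = ∫⁻ z : X × (Fin (p + 1) → X), G 0 z.1 (z.2 0) *
            ∏ i : Fin p, G i.succ (z.2 i.castSucc) (z.2 i.succ)
          ∂(ν.prod (Measure.pi fun _ => ν)) := by
          rw [← (measurePreserving_piFinSuccAbove (fun _ : Fin (p + 1 + 1) => ν)
            0).lintegral_comp_emb (MeasurableEquiv.measurableEmbedding _)]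
          exact lintegral_congr fun x => Fin.prod_univ_succ _
      _ = ∫⁻ y, (∫⁻ x, G 0 x (y 0) ∂ν) * ∏ i : Fin p, G i.succ (y i.castSucc) (y i.succ)
          ∂(Measure.pi fun _ => ν) := by
          rw [lintegral_prod_symm']
          · simp only [lintegral_mul_const _ (hG 0).of_uncurry_right]
          · exact (hGm _ (by fun_prop) (by fun_prop)).mul
              (Finset.measurable_prod _ fun i _ => hGm _ (by fun_prop) (by fun_prop))
      _ = ∫⁻ y, c 0 * ∏ i : Fin p, G i.succ (y i.castSucc) (y i.succ)
          ∂(Measure.pi fun _ => ν) :=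
          lintegral_congr_ae (hstart.mono fun y hy => by simp only [hy])
      _ = ∏ i, c i := by
          rw [lintegral_const_mul, ih (fun i => hG _) (fun i => hc _), Fin.prod_univ_succ]
          exact Finset.measurable_prod _ fun i _ => hGm _ (by fun_prop) (by fun_prop)

end ProductMeasure

section Uniform

instance isProbabilityMeasure_unifI : IsProbabilityMeasure unifI := ⟨by simp [unifI]⟩

theorem unifCube_eq_pi (d : ℕ) : unifCube d = Measure.pi fun _ => unifI := by
  rw [unifCube, volume_pi, ← Set.pi_univ_Icc, Measure.restrict_pi_pi]
  rfl

instance isProbabilityMeasure_unifCube (d : ℕ) : IsProbabilityMeasure (unifCube d) := by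
  rw [unifCube_eq_pi]
  infer_instance

theorem unifI_eq_restrict_Ioc : unifI = volume.restrict (Set.Ioc 0 1) :=
  Measure.restrict_congr_set Ioc_ae_eq_Icc.symm

theorem unifI_Iic (t : ℝ) : unifI (Set.Iic t) = ENNReal.ofReal (min t 1) := by
  have hinter : Set.Iic t ∩ Set.Icc 0 1 = Set.Icc 0 (min t 1) := by
    ext u
    simp only [Set.mem_inter_iff, Set.mem_Iic, Set.mem_Icc, le_min_iff]
    tauto
  rw [unifI, Measure.restrict_apply measurableSet_Iic, hinter, Real.volume_Icc, sub_zero]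

theorem lintegral_ofReal_eq_lintegral_measure_le_unifI {α : Type*} [MeasurableSpace α]
    (ν : Measure α) [SFinite ν] {f : α → ℝ} (hf : Measurable f) (hf1 : ∀ x, f x ≤ 1) :
    ∫⁻ x, ENNReal.ofReal (f x) ∂ν = ∫⁻ u, ν {x | u ≤ f x} ∂unifI := by
  have hmeas : MeasurableSet {q : α × ℝ | q.2 ≤ f q.1} :=
    measurableSet_le measurable_snd (hf.comp measurable_fst)
  calc ∫⁻ x, ENNReal.ofReal (f x) ∂ν = ∫⁻ x, unifI (Set.Iic (f x)) ∂ν := by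
        simp only [unifI_Iic, min_eq_left (hf1 _)]
    _ = (ν.prod unifI) {q | q.2 ≤ f q.1} := (Measure.prod_apply hmeas).symm
    _ = ∫⁻ u, ν {x | u ≤ f x} ∂unifI := Measure.prod_apply_symm hmeas

theorem lintegral_ofReal_rpow_unifI {s : ℝ} (hs : -1 < s) :
    ∫⁻ u, ENNReal.ofReal (u ^ s) ∂unifI = ENNReal.ofReal (s + 1)⁻¹ := by
  have hint : IntegrableOn (fun u : ℝ => u ^ s) (Set.Ioc 0 1) :=
    (intervalIntegrable_iff_integrableOn_Ioc_of_le zero_le_one).1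
      (intervalIntegral.intervalIntegrable_rpow' hs)
  have hnonneg : ∀ᵐ u ∂volume.restrict (Set.Ioc (0 : ℝ) 1), 0 ≤ u ^ s := by
    filter_upwards [ae_restrict_mem measurableSet_Ioc] with u hu
    exact Real.rpow_nonneg hu.1.le s
  rw [unifI_eq_restrict_Ioc, ← ofReal_integral_eq_lintegral_ofReal hint hnonneg,
    ← intervalIntegral.integral_of_le zero_le_one, integral_rpow (Or.inl hs), Real.one_rpow,
    Real.zero_rpow (by linarith), sub_zero, one_div]

end Uniform

section Torus

/-- The covering map from the cube `[0,1]^d` to the torus, realised as a power of the unit circle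
so that `torusDist` becomes the distance of the group norm and the uniform law the Haar measure. -/
def toTorus (d : ℕ) (x : Fin d → ℝ) : Fin d → UnitAddCircle := fun i => x i

theorem measurePreserving_toTorus (d : ℕ) :
    MeasurePreserving (toTorus d) (unifCube d) volume := by
  rw [unifCube_eq_pi, unifI_eq_restrict_Ioc]
  refine measurePreserving_pi _ (fun _ => (volume : Measure UnitAddCircle)) fun _ => ?_
  simpa only [zero_add] using UnitAddCircle.measurePreserving_mk 0

theorem norm_coe_unitAddCircle_of_abs_le_one {r : ℝ} (hr : |r| ≤ 1) :
    ‖(r : UnitAddCircle)‖ = min |r| (1 - |r|) := by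
  have habs : ‖(r : UnitAddCircle)‖ = ‖((|r| : ℝ) : UnitAddCircle)‖ := by
    rcases abs_choice r with h | h <;> rw [h]
    rw [AddCircle.coe_neg, norm_neg]
  rw [habs, UnitAddCircle.norm_eq, abs_sub_round_eq_min]
  rcases hr.lt_or_eq with h | h
  · rw [Int.fract_eq_self.2 ⟨abs_nonneg r, h⟩]
  · simp [h]

theorem torusDist_eq_norm {d : ℕ} {x y : Fin d → ℝ} (hx : x ∈ Set.Icc 0 1)
    (hy : y ∈ Set.Icc 0 1) : torusDist d x y = ‖toTorus d x - toTorus d y‖ := by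
  rw [torusDist, Pi.norm_def, Finset.sup_univ_eq_ciSup, NNReal.coe_iSup]
  refine iSup_congr fun i => (norm_coe_unitAddCircle_of_abs_le_one ?_).symm
  exact abs_sub_le_of_nonneg_of_le (hx.1 i) (hx.2 i) (hy.1 i) (hy.2 i)

theorem measurable_torusDist (d : ℕ) : Measurable (Function.uncurry (torusDist d)) := by
  unfold Function.uncurry torusDist
  fun_prop

theorem lintegral_comp_torusDist {d : ℕ} {f : ℝ → ℝ≥0∞} (hf : Measurable f) {y : Fin d → ℝ}
    (hy : y ∈ Set.Icc 0 1) :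
    ∫⁻ x, f (torusDist d x y) ∂unifCube d = ∫⁻ z : Fin d → UnitAddCircle, f ‖z‖ :=
  calc ∫⁻ x, f (torusDist d x y) ∂unifCube d
      = ∫⁻ x, f ‖toTorus d x - toTorus d y‖ ∂unifCube d :=
        setLIntegral_congr_fun measurableSet_Icc fun x hx => by rw [torusDist_eq_norm hx hy]
    _ = ∫⁻ z, f ‖z - toTorus d y‖ :=
        (measurePreserving_toTorus d).lintegral_comp (f := fun z => f ‖z - toTorus d y‖)
          (by fun_prop)
    _ = ∫⁻ z : Fin d → UnitAddCircle, f ‖z‖ :=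
        lintegral_sub_right_eq_self (fun z => f ‖z‖) _

theorem volume_torus_closedBall_le {ι : Type*} [Fintype ι] (x : ι → UnitAddCircle) {r : ℝ}
    (hr : 0 ≤ r) :
    volume (Metric.closedBall x r) ≤ ENNReal.ofReal ((2 * r) ^ Fintype.card ι) := by
  rw [closedBall_pi x hr, volume_pi_pi, ENNReal.ofReal_pow (by positivity), ← Finset.card_univ]
  refine Finset.prod_le_pow_card _ _ _ fun i _ => ?_
  rw [AddCircle.volume_closedBall]
  exact ENNReal.ofReal_le_ofReal (min_le_right _ _)

instance isProbabilityMeasure_volume_torus (ι : Type*) [Fintype ι] :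
    IsProbabilityMeasure (volume : Measure (ι → UnitAddCircle)) :=
  ⟨by simp only [volume_pi, Measure.pi_univ, UnitAddCircle.measure_univ, Finset.prod_const_one]⟩

theorem volume_torus_norm_pow_le {d : ℕ} (hd : d ≠ 0) {s : ℝ} (hs : 0 ≤ s) :
    volume {z : Fin d → UnitAddCircle | ‖z‖ ^ d ≤ s} ≤ ENNReal.ofReal (2 ^ d * s) := by
  set r : ℝ := s ^ (d : ℝ)⁻¹
  have hr : 0 ≤ r := Real.rpow_nonneg hs _
  have hrd : r ^ d = s := Real.rpow_inv_natCast_pow hs hd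
  calc volume {z : Fin d → UnitAddCircle | ‖z‖ ^ d ≤ s}
      ≤ volume (Metric.closedBall (0 : Fin d → UnitAddCircle) r) :=
        measure_mono fun z (hz : ‖z‖ ^ d ≤ s) =>
          mem_closedBall_zero_iff.2 (le_of_pow_le_pow_left₀ hd hr (hrd ▸ hz))
    _ ≤ ENNReal.ofReal (2 ^ d * s) := by
        simpa only [Fintype.card_fin, mul_pow, hrd] using
          volume_torus_closedBall_le (0 : Fin d → UnitAddCircle) hr

end Torus

section GeometricKernel

theorem C1_pos (d : ℕ) {γ : ℝ} (hγ : 1 < γ) : 0 < C1 d γ := by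
  have : 0 < γ - 1 := sub_pos.2 hγ
  unfold C1
  positivity

theorem le_mul_rpow_of_le_min_div_rpow {γ c r u : ℝ} (hγ : 0 < γ) (hc : 0 ≤ c) (hr : 0 ≤ r)
    (hu : 0 < u) (h : u ≤ min (c / r) 1 ^ γ) : r ≤ c * u ^ (-γ⁻¹) := by
  have hroot : u ^ γ⁻¹ ≤ c / r :=
    ((Real.rpow_inv_le_iff_of_pos hu.le (by positivity) hγ).2 h).trans (min_le_left _ _)
  have hroot_pos : 0 < u ^ γ⁻¹ := Real.rpow_pos_of_pos hu _
  rw [Real.rpow_neg hu.le, ← div_eq_mul_inv]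
  rcases hr.eq_or_lt with rfl | hr
  · positivity
  · exact (le_div_comm₀ hroot_pos hr).1 hroot

theorem lintegral_geometricKernel_le {d : ℕ} (hd : d ≠ 0) {γ c : ℝ} (hγ : 1 < γ) (hc : 0 ≤ c) :
    ∫⁻ z : Fin d → UnitAddCircle, ENNReal.ofReal (min (c / ‖z‖ ^ d) 1 ^ γ)
      ≤ ENNReal.ofReal (C1 d γ * c) := by
  have hγ0 : 0 < γ := zero_lt_one.trans hγ
  have hexp : -1 < -γ⁻¹ := neg_lt_neg (inv_lt_one_of_one_lt₀ hγ)
  have hle_one (z : Fin d → UnitAddCircle) : min (c / ‖z‖ ^ d) 1 ^ γ ≤ 1 :=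
    Real.rpow_le_one (by positivity) (min_le_right _ _) hγ0.le
  have hconst : 2 ^ d * c * (-γ⁻¹ + 1)⁻¹ = C1 d γ * c := by
    have : γ - 1 ≠ 0 := (sub_pos.2 hγ).ne'
    have : -γ⁻¹ + 1 = (γ - 1) / γ := by field_simp; ring
    rw [C1, this]
    field_simp
    ring
  calc ∫⁻ z : Fin d → UnitAddCircle, ENNReal.ofReal (min (c / ‖z‖ ^ d) 1 ^ γ)
      = ∫⁻ u, volume {z : Fin d → UnitAddCircle | u ≤ min (c / ‖z‖ ^ d) 1 ^ γ} ∂unifI :=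
        lintegral_ofReal_eq_lintegral_measure_le_unifI _ (by fun_prop) hle_one
    _ ≤ ∫⁻ u, ENNReal.ofReal (2 ^ d * c) * ENNReal.ofReal (u ^ (-γ⁻¹)) ∂unifI := by
        rw [unifI_eq_restrict_Ioc]
        refine setLIntegral_mono' measurableSet_Ioc fun u hu => ?_
        have hu0 : 0 < u := hu.1
        rw [← ENNReal.ofReal_mul (by positivity), mul_assoc]
        exact (measure_mono fun z hz => le_mul_rpow_of_le_min_div_rpow hγ0 hc (by positivity) hu0
          hz).trans (volume_torus_norm_pow_le hd (by positivity))
    _ = ENNReal.ofReal (C1 d γ * c) := by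
        rw [lintegral_const_mul _ (by fun_prop), lintegral_ofReal_rpow_unifI hexp,
          ← ENNReal.ofReal_mul (by positivity), hconst]

end GeometricKernel

section Edge

variable {n : ℕ} (k d : ℕ) (γ μ : ℝ) (w : Fin n → ℝ)

/-- The connection probability `pH1` of the pair `i`, `j` as a function of the distance `r` between
their positions; it is constant in `r` unless both vertices are type-B. -/
def distConnProb (i j : Fin n) (r : ℝ) : ℝ :=
  if i.val < k ∧ j.val < k then
    (1 + C1 d γ)⁻¹ * min (w i * w j / (μ * k * r ^ d)) 1 ^ γ
  else (1 + C1 d γ)⁻¹ * pIRG n μ w i j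

/-- The probability `P₁(i ↔ j)`, written as an integral over the difference `z` of the two
positions on the torus. -/
def edgeProb (i j : Fin n) : ℝ≥0∞ :=
  ∫⁻ z : Fin d → UnitAddCircle, unifI (Set.Iic (distConnProb k d γ μ w i j ‖z‖))

/-- The effective population size of the pair `i`, `j`: `k` for two type-B vertices and `n`
otherwise. -/
def pairSize (i j : Fin n) : ℝ := if i.val < k ∧ j.val < k then k else n

theorem pH1_eq_distConnProb (pos : Fin n → Fin d → ℝ) (i j : Fin n) :
    pH1 n k d γ μ w pos i j = distConnProb k d γ μ w i j (torusDist d (pos i) (pos j)) := rfl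

theorem measurable_distConnProb (i j : Fin n) : Measurable (distConnProb k d γ μ w i j) := by
  unfold distConnProb
  split_ifs <;> fun_prop

theorem ae_lintegral_eq_edgeProb (i j : Fin n) : ∀ᵐ y ∂unifCube d,
    ∫⁻ x, unifI (Set.Iic (distConnProb k d γ μ w i j (torusDist d x y))) ∂unifCube d
      = edgeProb k d γ μ w i j := by
  filter_upwards [ae_restrict_mem measurableSet_Icc] with y hy
  exact lintegral_comp_torusDist
    ((measurable_measure_Iic unifI).comp (measurable_distConnProb k d γ μ w i j)) hy

variable {k d γ μ w}

theorem pairSize_nonneg (i j : Fin n) : 0 ≤ pairSize k i j := by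
  unfold pairSize
  split_ifs <;> positivity

theorem edgeProb_le (hd : d ≠ 0) (hγ : 1 < γ) (hμ : 0 ≤ μ) {i j : Fin n} (hi : 0 ≤ w i)
    (hj : 0 ≤ w j) :
    edgeProb k d γ μ w i j ≤ ENNReal.ofReal (w i * w j / (μ * pairSize k i j)) := by
  have hC := C1_pos d hγ
  have hcorr (c : ℝ) (hc : 0 ≤ c) : (1 + C1 d γ)⁻¹ * c ≤ c :=
    mul_le_of_le_one_left hc (inv_le_one_of_one_le₀ (by linarith))
  have hunif (t : ℝ) : unifI (Set.Iic t) ≤ ENNReal.ofReal t := by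
    rw [unifI_Iic]
    exact ENNReal.ofReal_le_ofReal (min_le_left _ _)
  unfold edgeProb distConnProb pairSize
  split_ifs with hB
  · set c := w i * w j / (μ * k)
    have hc : 0 ≤ c := by positivity
    calc ∫⁻ z : Fin d → UnitAddCircle,
          unifI (Set.Iic ((1 + C1 d γ)⁻¹ * min (w i * w j / (μ * k * ‖z‖ ^ d)) 1 ^ γ))
        ≤ ∫⁻ z : Fin d → UnitAddCircle, ENNReal.ofReal (1 + C1 d γ)⁻¹ *
            ENNReal.ofReal (min (c / ‖z‖ ^ d) 1 ^ γ) := by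
          refine lintegral_mono fun z => (hunif _).trans_eq ?_
          rw [ENNReal.ofReal_mul (by positivity), div_div]
      _ ≤ ENNReal.ofReal (1 + C1 d γ)⁻¹ * ENNReal.ofReal (C1 d γ * c) := by
          rw [lintegral_const_mul _ (by fun_prop)]
          gcongr
          exact lintegral_geometricKernel_le hd hγ hc
      _ ≤ ENNReal.ofReal c := by
          rw [← ENNReal.ofReal_mul (by positivity)]
          refine ENNReal.ofReal_le_ofReal ?_
          rw [inv_mul_le_iff₀ (by positivity)]
          linarith
  · rw [lintegral_const, measure_univ, mul_one]
    refine (hunif _).trans (ENNReal.ofReal_le_ofReal ?_)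
    exact (hcorr _ (by unfold pIRG; positivity)).trans (min_le_left _ _)

end Edge

section Path

theorem injective_min_max_path {α : Type*} [LinearOrder α] {p : ℕ} {a : Fin (p + 1) → α}
    (ha : Function.Injective a) : Function.Injective fun i : Fin p =>
      (min (a i.castSucc) (a i.succ), max (a i.castSucc) (a i.succ)) := by
  intro i j h
  have hpair : (a i.castSucc = a j.castSucc ∧ a i.succ = a j.succ) ∨
      (a i.castSucc = a j.succ ∧ a i.succ = a j.castSucc) := by
    simp only [Prod.mk.injEq] at h
    grind
  rcases hpair with ⟨hsame, -⟩ | ⟨hcross, hcross'⟩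
  · exact Fin.castSucc_injective p (ha hsame)
  · have hval := congrArg Fin.val (ha hcross)
    have hval' := congrArg Fin.val (ha hcross')
    simp only [Fin.val_castSucc, Fin.val_succ] at hval hval'
    omega

theorem prod_path_mul_endpoints {M : Type*} [CommMonoid M] {p : ℕ} (v : Fin (p + 1) → M) :
    (∏ i : Fin p, v i.castSucc * v i.succ) * (v 0 * v (Fin.last p)) = ∏ i, v i ^ 2 := by
  calc (∏ i : Fin p, v i.castSucc * v i.succ) * (v 0 * v (Fin.last p))
      = ((∏ i : Fin p, v i.castSucc) * v (Fin.last p)) * (v 0 * ∏ i : Fin p, v i.succ) := by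
        rw [Finset.prod_mul_distrib]
        ac_rfl
    _ = ∏ i, v i ^ 2 := by
        rw [← Fin.prod_univ_castSucc, ← Fin.prod_univ_succ, Finset.prod_pow, sq]

theorem prod_pairSize_path {n p : ℕ} (k : ℕ) (a : Fin (p + 1) → Fin n) :
    ∏ i : Fin p, pairSize k (a i.castSucc) (a i.succ)
      = (k : ℝ) ^ pathGeoCount n k p a * (n : ℝ) ^ (p - pathGeoCount n k p a) := by
  unfold pairSize pathGeoCount
  rw [Finset.prod_ite, Finset.prod_const, Finset.prod_const, Finset.filter_not,
    Finset.card_sdiff_of_subset (Finset.filter_subset _ _), Finset.card_univ, Fintype.card_fin]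

variable {n : ℕ} (k d : ℕ) (γ μ : ℝ) (w : Fin n → ℝ)

theorem H1Measure_path_eq_lintegral {p : ℕ} {a : Fin (p + 1) → Fin n}
    (ha : Function.Injective a) :
    H1Measure n d {ω | ∀ i : Fin p, edgeH1 n k d γ μ w ω (a i.castSucc) (a i.succ)}
      = ∫⁻ x : Fin (p + 1) → Fin d → ℝ, ∏ i : Fin p,
          unifI (Set.Iic (distConnProb k d γ μ w (a i.castSucc) (a i.succ)
            (torusDist d (x i.castSucc) (x i.succ))))
        ∂(Measure.pi fun _ => unifCube d) := by
  set f : Fin p → (Fin d → ℝ) → (Fin d → ℝ) → ℝ := fun i x y =>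
    distConnProb k d γ μ w (a i.castSucc) (a i.succ) (torusDist d x y)
  have hf (i : Fin p) : Measurable (Function.uncurry (f i)) :=
    (measurable_distConnProb ..).comp (measurable_torusDist d)
  have hfpath {m : ℕ} (b : Fin (p + 1) → Fin m) (i : Fin p) :
      Measurable fun x : Fin m → Fin d → ℝ => f i (x (b i.castSucc)) (x (b i.succ)) :=
    (hf i).comp (f := fun x : Fin m → Fin d → ℝ => (x (b i.castSucc), x (b i.succ))) (by fun_prop)
  have hevent : {ω : H1Space n d | ∀ i : Fin p, edgeH1 n k d γ μ w ω (a i.castSucc) (a i.succ)}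
      = {ω | ∀ i : Fin p, ω.2 (min (a i.castSucc) (a i.succ)) (max (a i.castSucc) (a i.succ))
          ≤ f i (ω.1 (a i.castSucc)) (ω.1 (a i.succ))} := by
    have hne (i : Fin p) : a i.castSucc ≠ a i.succ := ha.ne i.castSucc_lt_succ.ne
    simp only [edgeH1, pH1_eq_distConnProb, hne, ne_eq, not_false_eq_true, true_and, f]
  rw [hevent]
  refine (prod_pi_pi_setOf_forall_le _ (fun _ _ => unifI) (injective_min_max_path ha)
    (hfpath a)).trans ?_
  exact (measurePreserving_pi_comp_injective (fun _ => unifCube d) ha).lintegral_comp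
    (f := fun x => ∏ i : Fin p, unifI (Set.Iic (f i (x i.castSucc) (x i.succ))))
    (Finset.measurable_prod _ fun i _ => (measurable_measure_Iic unifI).comp (hfpath id i))

theorem H1Measure_path {p : ℕ} {a : Fin (p + 1) → Fin n} (ha : Function.Injective a) :
    H1Measure n d {ω | ∀ i : Fin p, edgeH1 n k d γ μ w ω (a i.castSucc) (a i.succ)}
      = ∏ i : Fin p, edgeProb k d γ μ w (a i.castSucc) (a i.succ) := by
  rw [H1Measure_path_eq_lintegral k d γ μ w ha]
  exact lintegral_pi_prod_path (unifCube d)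
    (G := fun i x y =>
      unifI (Set.Iic (distConnProb k d γ μ w (a i.castSucc) (a i.succ) (torusDist d x y))))
    (fun i => (measurable_measure_Iic unifI).comp
      ((measurable_distConnProb ..).comp (measurable_torusDist d)))
    fun i => ae_lintegral_eq_edgeProb ..

theorem H1Measure_edge {i j : Fin n} (hij : i ≠ j) :
    H1Measure n d {ω | edgeH1 n k d γ μ w ω i j} = edgeProb k d γ μ w i j := by
  have hinj : Function.Injective ![i, j] := by
    simpa [Function.Injective, Fin.forall_fin_two, eq_comm] using hij
  simpa using H1Measure_path k d γ μ w (p := 1) hinj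

variable {k d γ μ w}

theorem prod_edgeProb_path_le (hd : d ≠ 0) (hγ : 1 < γ) (hμ : 0 ≤ μ) (hw : ∀ i, 0 < w i) {p : ℕ}
    (a : Fin (p + 1) → Fin n) :
    ∏ i : Fin p, edgeProb k d γ μ w (a i.castSucc) (a i.succ)
      ≤ ENNReal.ofReal (μ⁻¹ ^ p * ((∏ i : Fin (p + 1), w (a i) ^ 2)
          / (w (a 0) * w (a (Fin.last p)) * (k : ℝ) ^ pathGeoCount n k p a
            * (n : ℝ) ^ (p - pathGeoCount n k p a)))) := by
  have hpair (i : Fin p) : 0 ≤ w (a i.castSucc) * w (a i.succ)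
      / (μ * pairSize k (a i.castSucc) (a i.succ)) :=
    div_nonneg (mul_nonneg (hw _).le (hw _).le) (mul_nonneg hμ (pairSize_nonneg _ _))
  have hends : w (a 0) * w (a (Fin.last p)) ≠ 0 := mul_ne_zero (hw _).ne' (hw _).ne'
  calc ∏ i : Fin p, edgeProb k d γ μ w (a i.castSucc) (a i.succ)
      ≤ ∏ i : Fin p, ENNReal.ofReal (w (a i.castSucc) * w (a i.succ)
          / (μ * pairSize k (a i.castSucc) (a i.succ))) :=
        Finset.prod_le_prod' fun i _ => edgeProb_le hd hγ hμ (hw _).le (hw _).le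
    _ = ENNReal.ofReal (∏ i : Fin p, w (a i.castSucc) * w (a i.succ)
          / (μ * pairSize k (a i.castSucc) (a i.succ))) :=
        (ENNReal.ofReal_prod_of_nonneg fun i _ => hpair i).symm
    _ = _ := by
        rw [Finset.prod_div_distrib, Finset.prod_mul_distrib (f := fun _ => μ), prod_pairSize_path,
          Finset.prod_const, Finset.card_univ, Fintype.card_fin,
          ← prod_path_mul_endpoints fun i => w (a i), mul_assoc (w (a 0) * w (a (Fin.last p))),
          mul_comm (∏ i : Fin p, _) (w (a 0) * _), mul_div_mul_left _ _ hends, inv_pow,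
          ← div_div, div_right_comm, div_eq_inv_mul]

end Path

theorem muPar_pos {τ C w0 : ℝ} (hτ : 2 < τ) (hC : 0 < C) (hw0 : 0 < w0) : 0 < muPar τ C w0 := by
  have : 0 < τ - 1 := by linarith
  have : 0 < τ - 2 := by linarith
  unfold muPar
  positivity

theorem path_probability_H1_general {n k d : ℕ} (hd : 1 ≤ d) {γ μ : ℝ} (hγ : 1 < γ) (hμ : 0 < μ)
    {w : Fin n → ℝ} (hw : ∀ i, 0 < w i) {p : ℕ} {a : Fin (p + 1) → Fin n}
    (ha : Function.Injective a) :
    H1Measure n d {ω | ∀ i : Fin p, edgeH1 n k d γ μ w ω (a i.castSucc) (a i.succ)}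
        = ∏ i : Fin p, H1Measure n d {ω | edgeH1 n k d γ μ w ω (a i.castSucc) (a i.succ)} ∧
      (H1Measure n d {ω | ∀ i : Fin p,
          edgeH1 n k d γ μ w ω (a i.castSucc) (a i.succ)}).toReal
        ≤ μ⁻¹ ^ p * ((∏ i : Fin (p + 1), w (a i) ^ 2)
            / (w (a 0) * w (a (Fin.last p)) * (k : ℝ) ^ pathGeoCount n k p a
              * (n : ℝ) ^ (p - pathGeoCount n k p a))) := by
  have hfactor := H1Measure_path k d γ μ w ha
  refine ⟨hfactor.trans (Finset.prod_congr rfl fun i _ =>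
    (H1Measure_edge k d γ μ w (ha.ne i.castSucc_lt_succ.ne)).symm), ?_⟩
  rw [hfactor]
  refine ENNReal.toReal_le_of_le_ofReal ?_
    (prod_edgeProb_path_le (Nat.one_le_iff_ne_zero.1 hd) hγ hμ.le hw a)
  have := hw (a 0)
  have := hw (a (Fin.last p))
  positivity

/-- Lemma C.1: under `H₁`, the probability that all the edges of a path of distinct vertices
are present factorizes over the edges, and if `m` of the consecutive pairs are type-B/type-B
then it is `O(w_{a₁}⁻¹ w_{a_p}⁻¹ Π_i w_{a_i}² / (k^m n^(p-m-1)))`, uniformly over the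
choice of path. -/
theorem path_probability_H1
    (τ C w0 : ℝ) (hτ1 : 2 < τ) (hτ2 : τ < 3) (hC : 0 < C) (hw0 : 0 < w0)
    (hCw : C = w0 ^ (τ - 1))
    (γ : ℝ) (hγ : 1 < γ) (d : ℕ) (hd : 1 ≤ d)
    (k : ℕ → ℕ) (hkn : ∀ n, k n ≤ n)
    (hko : (fun n : ℕ => (k n : ℝ)) =o[atTop] fun n : ℕ => (n : ℝ))
    (w : (n : ℕ) → Fin n → ℝ) (hww0 : ∀ n (i : Fin n), w0 ≤ w n i)
    (hA1 : Assumption1 τ C w0 w)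
    (hA2 : Assumption2 τ C w0 k w)
    :
    (∀ (n p : ℕ), 1 ≤ p → ∀ a : Fin (p + 1) → Fin n, Function.Injective a →
      H1Measure n d {ω | ∀ i : Fin p,
          edgeH1 n (k n) d γ (muPar τ C w0) (w n) ω (a i.castSucc) (a i.succ)}
        = ∏ i : Fin p, H1Measure n d {ω |
            edgeH1 n (k n) d γ (muPar τ C w0) (w n) ω (a i.castSucc) (a i.succ)}) ∧
    (∀ p : ℕ, 1 ≤ p → ∃ K > (0:ℝ), ∀ (n : ℕ) (a : Fin (p + 1) → Fin n),
      Function.Injective a →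
      (H1Measure n d {ω | ∀ i : Fin p,
          edgeH1 n (k n) d γ (muPar τ C w0) (w n) ω (a i.castSucc) (a i.succ)}).toReal
        ≤ K * ((∏ i : Fin (p + 1), w n (a i) ^ 2)
            / (w n (a 0) * w n (a (Fin.last p))
              * (k n : ℝ) ^ pathGeoCount n (k n) p a
              * (n : ℝ) ^ (p - pathGeoCount n (k n) p a)))) := by
  have hμ := muPar_pos hτ1 hC hw0
  have hpath (n p : ℕ) (a : Fin (p + 1) → Fin n) (ha : Function.Injective a) :=
    path_probability_H1_general (k := k n) hd hγ hμ (fun i => hw0.trans_le (hww0 n i)) ha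
  exact ⟨fun n p _ a ha => (hpath n p a ha).1,
    fun p _ => ⟨_, pow_pos (inv_pos.2 hμ) p, fun n a ha => (hpath n p a ha).2⟩⟩
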